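/- arXiv:1606.08085 — 3 statements merged into one kernel-verified Lean document; each statement's English description precedes it below -/
import Mathlib

section
/- Let A be the adjacency matrix of an undirected circulant graph on N vertices with generating set S, positive weights (d_s)_{s∈S}, degree d per node and bandwidth B, let k ≥ 1 be an integer with 2kB < N, and let H_HP = (1/2^k)(I_N − A/d)^k be the HGSWT high-pass filter of order 2k. Then the representer polynomial of H_HP has 2k vanishing moments: for every polynomial p of degree at most 2k−1, the graph signal x with x_j = p(j) (j = 0,…,N−1) satisfies (H_HP x)_i = 0 for every index i with kB ≤ i ≤ N−1−kB. -/
/-- The symmetric circulant adjacency matrix of the circulant graph on `N` vertices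
with generating set `S` and weights `w`. -/
noncomputable def circAdj (N : ℕ) (S : Finset ℕ) (w : ℕ → ℝ) :
    Matrix (Fin N) (Fin N) ℝ :=
  fun i j => ∑ s ∈ S,
    if ((i : ℤ) - (j : ℤ)) % (N : ℤ) = (s : ℤ) % (N : ℤ) ∨
       ((i : ℤ) - (j : ℤ)) % (N : ℤ) = (-(s : ℤ)) % (N : ℤ)
    then w s else 0

/-!
Away from the border, `A` acts on a sampled polynomial `p` as `∑ s, w s (p(X + s) + p(X - s))`, so
`d I - A` acts as the weighted sum of the second differences `2 p(X) - p(X + s) - p(X - s)`, each of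
which lowers the degree by at least two. Every factor of `(I - A/d) ^ k` widens the border by `B`,
and `k` of them annihilate a polynomial of degree less than `2 k`.
-/

open Polynomial

section SecondDifference

variable {R : Type*} [CommRing R]

lemma degree_taylor_sub_self_lt (r : R) {p : R[X]} {n : ℕ} (hp : p.degree < (n + 1 : ℕ)) :
    (taylor r p - p).degree < n := by
  obtain rfl | hp₀ := eq_or_ne p 0
  · simp
  · have hlt : (taylor r p - p).degree < p.degree :=
      degree_sub_lt_right (degree_taylor p r) hp₀ (leadingCoeff_taylor r p)
    rw [degree_eq_natDegree hp₀, Nat.cast_lt] at hp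
    exact hlt.trans_le (degree_le_natDegree.trans (by exact_mod_cast Nat.lt_succ_iff.1 hp))

lemma degree_two_nsmul_sub_taylor_add_taylor_neg_lt (r : R) {p : R[X]} {n : ℕ}
    (hp : p.degree < (n + 2 : ℕ)) :
    (2 • p - (taylor r p + taylor (-r) p)).degree < n := by
  have hfactor : 2 • p - (taylor r p + taylor (-r) p) =
      taylor r (taylor (-r) p - p) - (taylor (-r) p - p) := by
    rw [map_sub, taylor_taylor, add_neg_cancel, taylor_zero]
    abel
  rw [hfactor]
  exact degree_taylor_sub_self_lt r (degree_taylor_sub_self_lt (-r) hp)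

end SecondDifference

section PolynomialLaplacian

variable {K : Type*} [Field K] {S : Finset ℕ} {w : ℕ → K}

/-- The normalized Laplacian `I - A/d` of the circulant graph on `ℤ` with generating set `S` and
weights `w`, as an operator on polynomial signals: the borderless model of `I - A/d` on `N`
vertices. The translation `p(X) ↦ p(X + s)` is encoded as `taylor s`. -/
noncomputable def polyLaplacian (S : Finset ℕ) (w : ℕ → K) : Module.End K K[X] :=
  1 - (∑ s ∈ S, 2 * w s)⁻¹ • ∑ s ∈ S, w s • (taylor (s : K) + taylor (-(s : K)))

lemma eval_polyLaplacian (p : K[X]) (t : K) :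
    (polyLaplacian S w p).eval t =
      p.eval t - (∑ s ∈ S, 2 * w s)⁻¹ * ∑ s ∈ S, w s * (p.eval (t + s) + p.eval (t - s)) := by
  simp [polyLaplacian, eval_finsetSum, taylor_eval, sub_eq_add_neg, mul_add]

lemma polyLaplacian_apply_eq_sum (hd : ∑ s ∈ S, 2 * w s ≠ 0) (p : K[X]) :
    polyLaplacian S w p = (∑ s ∈ S, 2 * w s)⁻¹ •
      ∑ s ∈ S, w s • (2 • p - (taylor (s : K) p + taylor (-(s : K)) p)) := by
  have hsum : ∑ s ∈ S, w s • 2 • p = (∑ s ∈ S, 2 * w s) • p := by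
    rw [Finset.sum_smul]
    exact Finset.sum_congr rfl fun s _ => by module
  simp only [smul_sub, Finset.sum_sub_distrib, hsum, inv_smul_smul₀ hd]
  simp [polyLaplacian]

lemma degree_polyLaplacian_lt (hd : ∑ s ∈ S, 2 * w s ≠ 0) {p : K[X]} {n : ℕ}
    (hp : p.degree < (n + 2 : ℕ)) : (polyLaplacian S w p).degree < n := by
  rw [polyLaplacian_apply_eq_sum hd, ← mem_degreeLT]
  exact Submodule.smul_mem _ _ <| Submodule.sum_mem _ fun s _ => Submodule.smul_mem _ _ <|
    mem_degreeLT.2 <| degree_two_nsmul_sub_taylor_add_taylor_neg_lt _ hp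

lemma polyLaplacian_pow_apply_eq_zero (hd : ∑ s ∈ S, 2 * w s ≠ 0) (k : ℕ) {p : K[X]}
    (hp : p.degree < (2 * k : ℕ)) : (polyLaplacian S w ^ k) p = 0 := by
  induction k generalizing p with
  | zero => simpa using hp
  | succ k ih => exact pow_succ (polyLaplacian S w) k ▸ ih (degree_polyLaplacian_lt hd hp)

end PolynomialLaplacian

section Circulant

variable {N B : ℕ} {S : Finset ℕ} {w : ℕ → ℝ}

lemma emod_eq_emod_iff_of_abs_sub_lt {a b n : ℤ} (h : |a - b| < n) : a % n = b % n ↔ a = b :=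
  ⟨fun hab => sub_eq_zero.1 <| Int.eq_zero_of_abs_lt_dvd (Int.ModEq.dvd hab.symm) h,
    fun hab => hab ▸ rfl⟩

lemma circAdj_apply_of_interior {i : Fin N} (hlo : ∀ s ∈ S, s ≤ (i : ℕ))
    (hhi : ∀ s ∈ S, (i : ℕ) + s < N) (j : Fin N) :
    circAdj N S w i j =
      ∑ s ∈ S, if (j : ℤ) = (i : ℤ) - s ∨ (j : ℤ) = (i : ℤ) + s then w s else 0 := by
  refine Finset.sum_congr rfl fun s hs => if_congr (or_congr ?_ ?_) rfl rfl
  all_goals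
    have := hlo s hs
    have := hhi s hs
    rw [emod_eq_emod_iff_of_abs_sub_lt (abs_lt.2 ⟨by omega, by omega⟩)]
    omega

lemma circAdj_mulVec_apply_of_interior (hS : ∀ s ∈ S, 1 ≤ s ∧ s ≤ B) {i : Fin N}
    (hlo : B ≤ (i : ℕ)) (hhi : (i : ℕ) + B < N) {y : Fin N → ℝ} {f : ℤ → ℝ}
    (hy : ∀ j : Fin N, |(j : ℤ) - i| ≤ B → y j = f j) :
    (circAdj N S w).mulVec y i = ∑ s ∈ S, w s * (f ((i : ℤ) + s) + f ((i : ℤ) - s)) := by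
  have hbounds (s : ℕ) (hs : s ∈ S) : 1 ≤ s ∧ s ≤ (i : ℕ) ∧ (i : ℕ) + s < N := by
    have := hS s hs
    omega
  simp only [Matrix.mulVec, dotProduct, Finset.sum_mul,
    circAdj_apply_of_interior (fun s hs => (hbounds s hs).2.1) (fun s hs => (hbounds s hs).2.2)]
  rw [Finset.sum_comm]
  refine Finset.sum_congr rfl fun s hs => ?_
  obtain ⟨hs₁, hsi, hsN⟩ := hbounds s hs
  have hsB : s ≤ B := (hS s hs).2
  let left : Fin N := ⟨(i : ℕ) - s, by omega⟩
  let right : Fin N := ⟨(i : ℕ) + s, hsN⟩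
  have hleft : (left : ℤ) = (i : ℤ) - s := Nat.cast_sub hsi
  have hright : (right : ℤ) = (i : ℤ) + s := Nat.cast_add _ _
  have hneighbours (j : Fin N) :
      ((j : ℤ) = (i : ℤ) - s ∨ (j : ℤ) = (i : ℤ) + s) ↔ j ∈ ({right, left} : Finset (Fin N)) := by
    simp only [Finset.mem_insert, Finset.mem_singleton, Fin.ext_iff]
    omega
  have hne : right ≠ left := fun h => by rw [h] at hright; omega
  simp only [hneighbours, ite_mul, zero_mul]
  rw [Finset.sum_ite_mem, Finset.univ_inter, Finset.sum_pair hne,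
    hy right (abs_le.2 ⟨by omega, by omega⟩), hy left (abs_le.2 ⟨by omega, by omega⟩),
    hright, hleft, mul_add]

/-- The normalized Laplacian `I - A/d` of the circulant graph, the high-pass filter being
`(1 / 2 ^ k) • circLaplacian N S w ^ k`. -/
noncomputable def circLaplacian (N : ℕ) (S : Finset ℕ) (w : ℕ → ℝ) : Matrix (Fin N) (Fin N) ℝ :=
  1 - (∑ s ∈ S, 2 * w s)⁻¹ • circAdj N S w

lemma circLaplacian_mulVec_eq_eval_polyLaplacian (hS : ∀ s ∈ S, 1 ≤ s ∧ s ≤ B) {i : Fin N}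
    (hlo : B ≤ (i : ℕ)) (hhi : (i : ℕ) + B < N) {y : Fin N → ℝ} {q : ℝ[X]}
    (hy : ∀ j : Fin N, |(j : ℤ) - i| ≤ B → y j = q.eval ((j : ℕ) : ℝ)) :
    (circLaplacian N S w).mulVec y i = (polyLaplacian S w q).eval ((i : ℕ) : ℝ) := by
  have hadj := circAdj_mulVec_apply_of_interior (w := w) hS hlo hhi
    (f := fun z => q.eval (z : ℝ)) fun j hj => by simpa using hy j hj
  have hself : y i = q.eval ((i : ℕ) : ℝ) := hy i (by simp)
  rw [circLaplacian, Matrix.sub_mulVec, Matrix.one_mulVec, Matrix.smul_mulVec, Pi.sub_apply,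
    Pi.smul_apply, hadj, hself, eval_polyLaplacian]
  push_cast
  rfl

lemma circLaplacian_pow_mulVec_eq_eval_polyLaplacian_pow (hS : ∀ s ∈ S, 1 ≤ s ∧ s ≤ B)
    (p : ℝ[X]) (k : ℕ) {i : Fin N} (hlo : k * B ≤ (i : ℕ)) (hhi : (i : ℕ) + k * B < N) :
    (circLaplacian N S w ^ k).mulVec (fun j : Fin N => p.eval ((j : ℕ) : ℝ)) i =
      ((polyLaplacian S w ^ k) p).eval ((i : ℕ) : ℝ) := by
  induction k generalizing i with
  | zero => simp
  | succ k ih =>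
    rw [Nat.succ_mul] at hlo hhi
    rw [pow_succ', ← Matrix.mulVec_mulVec, pow_succ', Module.End.mul_apply]
    refine circLaplacian_mulVec_eq_eval_polyLaplacian hS (by omega) (by omega) fun j hj => ?_
    have := abs_le.1 hj
    exact ih (by omega) (by omega)

end Circulant

theorem hgswt_highpass_vanishing_moments_general {N B k : ℕ} {S : Finset ℕ} {w : ℕ → ℝ}
    (hS : ∀ s ∈ S, 1 ≤ s ∧ s ≤ B) (hd : ∑ s ∈ S, 2 * w s ≠ 0)
    {p : ℝ[X]} (hp : p.degree < (2 * k : ℕ))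
    {i : Fin N} (hlo : k * B ≤ (i : ℕ)) (hhi : (i : ℕ) + k * B < N) :
    ((1 / 2 ^ k : ℝ) • ((1 : Matrix (Fin N) (Fin N) ℝ) -
      (∑ s ∈ S, 2 * w s)⁻¹ • circAdj N S w) ^ k).mulVec
        (fun j : Fin N => p.eval ((j : ℕ) : ℝ)) i = 0 := by
  rw [← circLaplacian, Matrix.smul_mulVec, Pi.smul_apply,
    circLaplacian_pow_mulVec_eq_eval_polyLaplacian_pow hS p k hlo hhi,
    polyLaplacian_pow_apply_eq_zero hd k hp, eval_zero, smul_zero]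

/-- the HGSWT high-pass filter `H_HP = (1/2^k)(I − A/d)^k` has `2k`
vanishing moments: it annihilates polynomial graph signals of degree at most `2k−1`, up to
a border effect of size `kB`. -/
theorem hgswt_highpass_vanishing_moments
    (N : ℕ) (S : Finset ℕ) (w : ℕ → ℝ)
    (hS : ∀ s ∈ S, 1 ≤ s ∧ 2 * s ≤ N - 1)
    (hw : ∀ s ∈ S, 0 < w s) (hSne : S.Nonempty)
    (B : ℕ) (hBS : B ∈ S) (hBmax : ∀ s ∈ S, s ≤ B)
    (k : ℕ) (hk : 1 ≤ k) (hkB : 2 * (k * B) < N)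
    (A : Matrix (Fin N) (Fin N) ℝ) (hA : A = circAdj N S w)
    (H : Matrix (Fin N) (Fin N) ℝ)
    (hH : H = (1 / 2 ^ k : ℝ) •
      ((1 : Matrix (Fin N) (Fin N) ℝ) - (∑ s ∈ S, 2 * w s)⁻¹ • A) ^ k)
    (p : Polynomial ℝ) (hp : p.natDegree ≤ 2 * k - 1)
    (x : Fin N → ℝ) (hx : ∀ j : Fin N, x j = p.eval ((j : ℕ) : ℝ))
    (i : Fin N) (hi1 : k * B ≤ (i : ℕ)) (hi2 : (i : ℕ) ≤ N - 1 - k * B) :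
    H.mulVec x i = 0 := by
  have hd : ∑ s ∈ S, 2 * w s ≠ 0 :=
    (Finset.sum_pos (fun s hs => mul_pos two_pos (hw s hs)) hSne).ne'
  have hdeg : p.degree < (2 * k : ℕ) := degree_le_natDegree.trans_lt (by norm_cast; omega)
  obtain rfl : x = fun j : Fin N => p.eval ((j : ℕ) : ℝ) := funext hx
  subst hA hH
  exact hgswt_highpass_vanishing_moments_general (fun s hs => ⟨(hS s hs).1, hBmax s hs⟩) hd hdeg
    hi1 (by omega)
end

section
/- Let A be the adjacency matrix of an undirected, connected circulant graph on N vertices with degree d per node, let ᾱ = (α_1,…,α_T) with β_n = d̃_{α_n}/d, let k ≥ 1, and let H_LP = ∏_{n=1}^T (1/2^k)(β_n I + A/d)^k and H_HP = ∏_{n=1}^T (1/2^k)(β_n I − A/d)^k be the HGESWT filters. Suppose every eigenvalue γ of A/d satisfies |β_n| ≠ |γ| for all n = 1,…,T, and suppose either (i) k is even, or (ii) the quantity f(γ) = ∏_{n=1}^T (β_n² − γ²)^k has the same (strict) sign for all eigenvalues γ of A/d. Then for every diagonal downsampling matrix K with diagonal entries in {+1,−1}, the one-level filterbank matrix W = (1/2)(I_N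 + K)·H_LP + (1/2)(I_N − K)·H_HP is invertible. -/
/-!
At a vertex kept by the downsampling, the output of `W` is that of `H_LP`; at a discarded vertex it
is that of `H_HP`. Hence `W x = 0` forces the two filter outputs to have disjoint supports, and in
particular `⟪H_LP x, H_HP x⟫ = 0`. Both filters are real polynomials in the symmetric matrix
`B = A / d`, so this inner product is the quadratic form of `H_LP * H_HP` at `x`. The eigenvalues of
`H_LP * H_HP` are positive multiples of `f(γ) = ∏ₙ (βₙ² - γ²)ᵏ`, so the form is definite as soon as
`f` has constant strict sign on the spectrum of `B`, and then `x = 0`. For even `k` the condition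
`|βₙ| ≠ |γ|` makes every factor of `f` positive.
-/

open Matrix Polynomial

section Filterbank

variable {𝕜 m n : Type*} [Field 𝕜] [Fintype m] [DecidableEq m]

/-- The one-level two-channel filterbank with low-pass filter `L` and high-pass filter `H`. The
downsampling pattern `K` is meant to be diagonal with entries `1` (keep the low-pass output) and
`-1` (keep the high-pass output). -/
def filterbank (K : Matrix m m 𝕜) (L H : Matrix m n 𝕜) : Matrix m n 𝕜 :=
  (1 / 2 : 𝕜) • ((1 + K) * L) + (1 / 2 : 𝕜) • ((1 - K) * H)

theorem filterbank_row_eq_or [NeZero (2 : 𝕜)] {K : Matrix m m 𝕜} (hK : K.IsDiag)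
    (hKpm : ∀ a, K a a = 1 ∨ K a a = -1) (L H : Matrix m n 𝕜) (a : m) :
    filterbank K L H a = L a ∨ filterbank K L H a = H a := by
  have hentry (b : n) : filterbank K L H a b =
      (1 / 2) * ((1 + K a a) * L a b) + (1 / 2) * ((1 - K a a) * H a b) := by
    rw [← hK.diagonal_diag]
    simp only [filterbank, Matrix.add_mul, Matrix.sub_mul, Matrix.one_mul, Matrix.add_apply,
      Matrix.sub_apply, Matrix.smul_apply, diagonal_mul, diagonal_apply_eq, smul_eq_mul]
    ring
  rcases hKpm a with h | h
  · exact .inl (funext fun b => by rw [hentry, h]; field_simp; ring)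
  · exact .inr (funext fun b => by rw [hentry, h]; field_simp; ring)

end Filterbank

section RowSelection

variable {R m n : Type*} [Fintype n]

theorem star_mulVec_dotProduct_mulVec_eq_zero_of_row_eq_or
    [NonUnitalNonAssocSemiring R] [StarAddMonoid R] [Fintype m]
    {W L H : Matrix m n R} (hrow : ∀ a, W a = L a ∨ W a = H a) {x : n → R}
    (hx : W *ᵥ x = 0) : star (L *ᵥ x) ⬝ᵥ (H *ᵥ x) = 0 := by
  refine Finset.sum_eq_zero fun a _ => ?_
  have hWx : W a ⬝ᵥ x = 0 := congrFun hx a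
  rcases hrow a with h | h
  · have hLx : (L *ᵥ x) a = 0 := by rwa [h] at hWx
    rw [Pi.star_apply, hLx, star_zero, zero_mul]
  · have hHx : (H *ᵥ x) a = 0 := by rwa [h] at hWx
    rw [hHx, mul_zero]

theorem isUnit_of_row_eq_or_of_posDef [Field R] [PartialOrder R] [StarRing R] [DecidableEq n]
    {W L H : Matrix n n R} (hrow : ∀ a, W a = L a ∨ W a = H a)
    (hdef : (Lᴴ * H).PosDef ∨ (-(Lᴴ * H)).PosDef) : IsUnit W := by
  rw [← mulVec_injective_iff_isUnit, ← coe_mulVecLin, injective_iff_map_eq_zero]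
  intro x hx
  have horth : star x ⬝ᵥ ((Lᴴ * H) *ᵥ x) = 0 := by
    rw [← mulVec_mulVec, dotProduct_mulVec, ← star_mulVec]
    exact star_mulVec_dotProduct_mulVec_eq_zero_of_row_eq_or hrow hx
  by_contra hne
  rcases hdef with h | h
  · exact (h.dotProduct_mulVec_pos hne).ne' horth
  · exact (h.dotProduct_mulVec_pos hne).ne' (by rw [neg_mulVec, dotProduct_neg, horth, neg_zero])

end RowSelection

section HermitianCalculus

variable {𝕜 n : Type*} [RCLike 𝕜] [Fintype n] [DecidableEq n] {B : Matrix n n 𝕜}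

theorem isHermitian_aeval (hB : B.IsHermitian) (p : ℝ[X]) : (aeval B p).IsHermitian := by
  rw [← cfc_polynomial p B hB]
  exact cfc_predicate (p := IsSelfAdjoint) p.eval B

open scoped MatrixOrder ComplexOrder Matrix.Norms.L2Operator in
theorem posDef_aeval (hB : B.IsHermitian) {p : ℝ[X]} (hp : ∀ γ ∈ spectrum ℝ B, 0 < p.eval γ) :
    (aeval B p).PosDef := by
  rw [← isStrictlyPositive_iff_posDef, ← cfc_polynomial p B hB]
  exact (cfc_isStrictlyPositive_iff p.eval B p.continuousOn hB).mpr hp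

open scoped ComplexOrder in
theorem isUnit_filterbank_aeval (hB : B.IsHermitian) {K : Matrix n n 𝕜} (hK : K.IsDiag)
    (hKpm : ∀ a, K a a = 1 ∨ K a a = -1) {p q : ℝ[X]}
    (hpq : (∀ γ ∈ spectrum ℝ B, 0 < (p * q).eval γ) ∨ ∀ γ ∈ spectrum ℝ B, (p * q).eval γ < 0) :
    IsUnit (filterbank K (aeval B p) (aeval B q)) := by
  refine isUnit_of_row_eq_or_of_posDef (filterbank_row_eq_or hK hKpm _ _) ?_
  rw [(isHermitian_aeval hB p).eq, ← map_mul, ← map_neg]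
  refine hpq.imp (posDef_aeval hB) fun hneg => posDef_aeval hB fun γ hγ => ?_
  rw [eval_neg]
  exact neg_pos.mpr (hneg γ hγ)

end HermitianCalculus

section HGESWT

variable {ι : Type*} [Fintype ι]

/-- The HGESWT low-pass filter with parameters `β` and exponent `k`, as a polynomial in the
normalized adjacency matrix. -/
noncomputable def hgeswtLowPass (β : ι → ℝ) (k : ℕ) : ℝ[X] :=
  ∏ i, (1 / 2 ^ k : ℝ) • (C (β i) + X) ^ k

/-- The HGESWT high-pass filter with parameters `β` and exponent `k`, as a polynomial in the
normalized adjacency matrix. -/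
noncomputable def hgeswtHighPass (β : ι → ℝ) (k : ℕ) : ℝ[X] :=
  ∏ i, (1 / 2 ^ k : ℝ) • (C (β i) - X) ^ k

theorem aeval_hgeswtLowPass {R : Type*} [Ring R] [Algebra ℝ R] {T : ℕ} (β : Fin T → ℝ) (k : ℕ)
    (b : R) : aeval b (hgeswtLowPass β k) =
      ((List.finRange T).map fun i => (1 / 2 ^ k : ℝ) • (β i • (1 : R) + b) ^ k).prod := by
  simp only [hgeswtLowPass, ← List.prod_ofFn, List.ofFn_eq_map, map_list_prod, List.map_map,
    Function.comp_def, map_smul, map_pow, map_add, aeval_C, aeval_X,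
    Algebra.algebraMap_eq_smul_one]

theorem aeval_hgeswtHighPass {R : Type*} [Ring R] [Algebra ℝ R] {T : ℕ} (β : Fin T → ℝ) (k : ℕ)
    (b : R) : aeval b (hgeswtHighPass β k) =
      ((List.finRange T).map fun i => (1 / 2 ^ k : ℝ) • (β i • (1 : R) - b) ^ k).prod := by
  simp only [hgeswtHighPass, ← List.prod_ofFn, List.ofFn_eq_map, map_list_prod, List.map_map,
    Function.comp_def, map_smul, map_pow, map_sub, aeval_C, aeval_X,
    Algebra.algebraMap_eq_smul_one]

theorem eval_hgeswtLowPass_mul_hgeswtHighPass (β : ι → ℝ) (k : ℕ) (γ : ℝ) :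
    (hgeswtLowPass β k * hgeswtHighPass β k).eval γ =
      ((1 / 2 ^ k) ^ 2) ^ Fintype.card ι * ∏ i, (β i ^ 2 - γ ^ 2) ^ k := by
  rw [← Finset.card_univ, ← Finset.prod_const]
  simp only [hgeswtLowPass, hgeswtHighPass, eval_mul, eval_prod, eval_smul, eval_pow, eval_add,
    eval_sub, eval_C, eval_X, smul_eq_mul, ← Finset.prod_mul_distrib]
  refine Finset.prod_congr rfl fun i _ => ?_
  rw [sq_sub_sq, mul_pow]
  ring

theorem prod_sq_sub_sq_pow_pos {β : ι → ℝ} {k : ℕ} (hk : Even k) {γ : ℝ}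
    (hγ : ∀ i, |β i| ≠ |γ|) : 0 < ∏ i, (β i ^ 2 - γ ^ 2) ^ k :=
  Finset.prod_pos fun i _ =>
    hk.pow_pos (sub_ne_zero.mpr fun h => hγ i ((sq_eq_sq_iff_abs_eq_abs _ _).mp h))

theorem hgeswt_filterbank_invertible_general {𝕜 n : Type*} [RCLike 𝕜] [Fintype n] [DecidableEq n]
    {B : Matrix n n 𝕜} (hB : B.IsHermitian) (β : ι → ℝ) (k : ℕ)
    (hspec : ∀ γ ∈ spectrum ℝ B, ∀ i, |β i| ≠ |γ|)
    (hsign : Even k ∨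
      ((∀ γ ∈ spectrum ℝ B, 0 < ∏ i, (β i ^ 2 - γ ^ 2) ^ k) ∨
       (∀ γ ∈ spectrum ℝ B, ∏ i, (β i ^ 2 - γ ^ 2) ^ k < 0)))
    {K : Matrix n n 𝕜} (hK : K.IsDiag) (hKpm : ∀ a, K a a = 1 ∨ K a a = -1) :
    IsUnit (filterbank K (aeval B (hgeswtLowPass β k)) (aeval B (hgeswtHighPass β k))) := by
  have hscale : (0 : ℝ) < ((1 / 2 ^ k) ^ 2) ^ Fintype.card ι := by positivity
  apply isUnit_filterbank_aeval hB hK hKpm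
  simp only [eval_hgeswtLowPass_mul_hgeswtHighPass]
  rcases hsign with hk | hpos | hneg
  · exact .inl fun γ hγ => mul_pos hscale (prod_sq_sub_sq_pow_pos hk (hspec γ hγ))
  · exact .inl fun γ hγ => mul_pos hscale (hpos γ hγ)
  · exact .inr fun γ hγ => mul_neg_of_pos_of_neg hscale (hneg γ hγ)

end HGESWT

theorem circAdj_isHermitian (N : ℕ) (S : Finset ℕ) (w : ℕ → ℝ) :
    (circAdj N S w).IsHermitian := by
  ext i j
  refine Finset.sum_congr rfl fun s _ => if_congr ?_ rfl rfl
  change (j - i : ℤ) ≡ s [ZMOD N] ∨ (j - i : ℤ) ≡ -s [ZMOD N] ↔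
    (i - j : ℤ) ≡ s [ZMOD N] ∨ (i - j : ℤ) ≡ -s [ZMOD N]
  rw [← neg_sub (i : ℤ) j, Int.neg_modEq_neg, ← Int.neg_modEq_neg (b := (s : ℤ)), neg_neg,
    or_comm]

/-- invertibility of the one-level HGESWT filterbank, for any downsampling
pattern, provided `|β_n| ≠ |γ|` for all eigenvalues `γ` of `A/d` and either `k` is even or
`f(γ) = ∏_n (β_n² − γ²)^k` has the same strict sign on the spectrum of `A/d`. -/
theorem hgeswt_filterbank_invertible
    (N : ℕ) (S : Finset ℕ) (w : ℕ → ℝ)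
    (hS : ∀ s ∈ S, 1 ≤ s ∧ 2 * s ≤ N - 1)
    (hw : ∀ s ∈ S, 0 < w s)
    (hconn : Nat.gcd (S.gcd id) N = 1)
    (T : ℕ) (α : Fin T → ℝ)
    (β : Fin T → ℝ)
    (hβ : ∀ n : Fin T, β n =
      (∑ s ∈ S, 2 * w s * Real.cos (α n * s)) / (∑ s ∈ S, 2 * w s))
    (k : ℕ) (hk : 1 ≤ k)
    (A : Matrix (Fin N) (Fin N) ℝ) (hA : A = circAdj N S w)
    (HLP HHP : Matrix (Fin N) (Fin N) ℝ)
    (hHLP : HLP = ((List.finRange T).map (fun n =>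
      (1 / 2 ^ k : ℝ) • (β n • (1 : Matrix (Fin N) (Fin N) ℝ)
        + (∑ s ∈ S, 2 * w s)⁻¹ • A) ^ k)).prod)
    (hHHP : HHP = ((List.finRange T).map (fun n =>
      (1 / 2 ^ k : ℝ) • (β n • (1 : Matrix (Fin N) (Fin N) ℝ)
        - (∑ s ∈ S, 2 * w s)⁻¹ • A) ^ k)).prod)
    (hspec : ∀ γ ∈ spectrum ℝ ((∑ s ∈ S, 2 * w s)⁻¹ • A), ∀ n : Fin T, |β n| ≠ |γ|)
    (hsign : Even k ∨
      ((∀ γ ∈ spectrum ℝ ((∑ s ∈ S, 2 * w s)⁻¹ • A),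
          0 < ∏ n : Fin T, (β n ^ 2 - γ ^ 2) ^ k) ∨
       (∀ γ ∈ spectrum ℝ ((∑ s ∈ S, 2 * w s)⁻¹ • A),
          ∏ n : Fin T, (β n ^ 2 - γ ^ 2) ^ k < 0)))
    (K : Matrix (Fin N) (Fin N) ℝ)
    (hKdiag : ∀ a b : Fin N, a ≠ b → K a b = 0)
    (hKpm : ∀ a : Fin N, K a a = 1 ∨ K a a = -1)
    (W : Matrix (Fin N) (Fin N) ℝ)
    (hW : W = (1 / 2 : ℝ) • ((1 + K) * HLP) + (1 / 2 : ℝ) • ((1 - K) * HHP)) :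
    IsUnit W := by
  rw [hW, hHLP, hHHP, ← aeval_hgeswtLowPass, ← aeval_hgeswtHighPass]
  exact hgeswt_filterbank_invertible_general ((hA ▸ circAdj_isHermitian N S w).smul (.all _)) β k
    hspec hsign (fun a b => hKdiag a b) hKpm
end

section
/- Let A be the adjacency matrix of an undirected bipartite circulant graph on N vertices (N even, every element of S odd) with degree d per node, and let γ_l = d̃_{2πl/N}/d denote the DFT-ordered eigenvalues of A/d. Fix M ≤ N/2 and k ≥ 1, set β_n = γ_n for n = 0,…,M−1, and let E = ∏_{n=0}^{M−1} (1/2^k)(β_n I_N + A/d)^k be the corresponding HGESWT low-pass filter. Let U_M^H ∈ ℂ^{M×N} be the first M rows of the unnormalized N-dimensional DFT matrix, Ũ_M^H ∈ ℂ^{M×(N/2)} the first M rows of the unnormalized DFT matrix of dimension N/2, and Ψ ∈ {0,1}^{(N/2)×N} the binary sampling matrix with Ψ_{j,l} = 1 iff l = 2j (retaining even-numbered nodes). If c_m := ∏_{n=0}^{M−1} ((β_n + γ_m)/2)^k ≠ 0 for all m = 0,…,M−1, then U_M^H = Ĉ·Ũ_M^H·Ψ·E, where Ĉ ∈ ℂ^{M×M}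 is the invertible diagonal matrix with diagonal entries Ĉ_{mm} = 2/c_m. -/
/-!
The rows of the DFT matrix are left eigenvectors of every circulant matrix `B = circ(v)`, with the
DFT of `v` as eigenvalues. If `v` vanishes at even residues, then `J = diag((-1)ⁿ)` anticommutes
with `B`, so multiplying an eigenvector by `J` negates its eigenvalue. Sampling at even nodes
aliases each DFT row with its `J`-multiple, `Ũ Ψ = ½ U (1 + J)`, and a polynomial filter `p(B)`
with `p(-γ_m) = 0` removes the alias and scales the row itself by `p(γ_m)`.
-/

open Matrix Polynomial ZMod

section RowSpectrum

variable {m n R : Type*} [Fintype m] [DecidableEq m] [Fintype n] [DecidableEq n]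

theorem mul_aeval_of_mul_eq_mul [CommSemiring R] {U : Matrix m n R} {A : Matrix n n R}
    {D : Matrix m m R} (h : U * A = D * U) (p : R[X]) : U * aeval A p = aeval D p * U := by
  induction p using Polynomial.induction_on with
  | C a => simp [Algebra.algebraMap_eq_smul_one]
  | add p q hp hq => rw [map_add, map_add, Matrix.mul_add, Matrix.add_mul, hp, hq]
  | monomial k a ih =>
    rw [pow_succ, ← mul_assoc, aeval_mul (p := C a * X ^ k), aeval_mul (p := C a * X ^ k), aeval_X,
      aeval_X, ← Matrix.mul_assoc, ih, Matrix.mul_assoc, h, ← Matrix.mul_assoc]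

theorem aeval_diagonal [CommSemiring R] (d : m → R) (p : R[X]) :
    aeval (diagonal d) p = diagonal fun i => p.eval (d i) := by
  rw [← diagonalAlgHom_apply (R := R), aeval_algHom_apply, diagonalAlgHom_apply]
  congr 1
  ext i
  rw [Polynomial.aeval_pi_apply₂, coe_aeval_eq_eval]

theorem mul_one_add_mul_aeval_of_anticommute [CommRing R] {U : Matrix m n R} {A J : Matrix n n R}
    {μ : m → R} (hU : U * A = diagonal μ * U) (hJ : J * A = -(A * J)) {p : R[X]}
    (hp : ∀ i, p.eval (-μ i) = 0) :
    U * (1 + J) * aeval A p = diagonal (fun i => p.eval (μ i)) * U := by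
  have hUJ : U * J * A = diagonal (fun i => -μ i) * (U * J) := by
    rw [Matrix.mul_assoc, hJ, Matrix.mul_neg, ← Matrix.mul_assoc, hU, ← diagonal_neg,
      Matrix.neg_mul, Matrix.mul_assoc]
  have hvanish : U * J * aeval A p = 0 := by
    simp only [mul_aeval_of_mul_eq_mul hUJ, aeval_diagonal, hp, diagonal_zero, Matrix.zero_mul]
  rw [Matrix.mul_add, Matrix.mul_one, Matrix.add_mul, hvanish, add_zero,
    mul_aeval_of_mul_eq_mul hU, aeval_diagonal]

end RowSpectrum

section Circulant

/-- The circulant matrix with first column `v`, with rows and columns numbered `0, …, N - 1`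
rather than by residue classes. -/
def finCirculant {N : ℕ} {R : Type*} (v : ZMod N → R) : Matrix (Fin N) (Fin N) R :=
  (circulant v).submatrix (fun i => ((i : ℕ) : ZMod N)) fun j => ((j : ℕ) : ZMod N)

theorem finCirculant_apply {N : ℕ} {R : Type*} (v : ZMod N → R) (i j : Fin N) :
    finCirculant v i j = v ((i : ℕ) - (j : ℕ)) := rfl

theorem finCirculant_smul {N : ℕ} {α R : Type*} [SMul α R] (a : α) (v : ZMod N → R) :
    finCirculant (a • v) = a • finCirculant v := rfl

/-- The rows of frequency `l i` of the unnormalized DFT matrix of dimension `n`. -/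
noncomputable def dftRows (n : ℕ) {ι : Type*} (l : ι → ℕ) : Matrix ι (Fin n) ℂ :=
  of fun i j => Complex.exp (-2 * (Real.pi : ℂ) * Complex.I * (l i : ℂ) * ((j : ℕ) : ℂ) / (n : ℂ))

theorem dftRows_apply {N : ℕ} [NeZero N] {ι : Type*} (l : ι → ℕ) (i : ι) (j : Fin N) :
    dftRows N l i j = stdAddChar (-((j : ℕ) * l i : ZMod N)) := by
  have h := stdAddChar_coe (N := N) (-(j * l i))
  push_cast at h
  rw [h, dftRows, of_apply]
  ring_nf

theorem sum_natCast_zmod {N : ℕ} [NeZero N] {E : Type*} [AddCommMonoid E] (f : ZMod N → E) :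
    ∑ i : Fin N, f (i : ℕ) = ∑ x, f x := by
  let residue : Fin N ≃ ZMod N :=
    { toFun := fun i => (i : ℕ)
      invFun := fun x => ⟨x.val, x.val_lt⟩
      left_inv := fun i => Fin.ext (val_cast_of_lt i.2)
      right_inv := natCast_zmod_val }
  exact residue.sum_comp f

theorem dftRows_mul_finCirculant {N : ℕ} [NeZero N] {ι : Type*} [Fintype ι] [DecidableEq ι]
    (l : ι → ℕ) (v : ZMod N → ℂ) :
    dftRows N l * finCirculant v = diagonal (fun i => 𝓕 v (l i)) * dftRows N l := by
  ext i j
  calc (dftRows N l * finCirculant v) i j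
      = ∑ x : ZMod N, stdAddChar (-(x * (l i : ZMod N))) * v (x - ((j : ℕ) : ZMod N)) := by
        simp only [mul_apply, dftRows_apply, finCirculant_apply]
        exact sum_natCast_zmod fun x : ZMod N =>
          stdAddChar (-(x * (l i : ZMod N))) * v (x - (j : ℕ))
    _ = ∑ x : ZMod N, stdAddChar (-((x + ((j : ℕ) : ZMod N)) * (l i : ZMod N))) * v x :=
        Fintype.sum_equiv (Equiv.subRight ((j : ℕ) : ZMod N)) _ _ fun x => by simp
    _ = (diagonal (fun i => 𝓕 v (l i)) * dftRows N l) i j := by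
        simp only [diagonal_mul, dftRows_apply, dft_apply, smul_eq_mul, Finset.sum_mul, add_mul,
          neg_add, AddChar.map_add_eq_mul]
        exact Finset.sum_congr rfl fun x _ => mul_right_comm _ _ _

end Circulant

section Sampling

/-- The sampling matrix retaining the even-numbered nodes. For odd `N` it has `(N - 1) / 2` rows and
omits the last node. -/
def evenSampling (N : ℕ) : Matrix (Fin (N / 2)) (Fin N) ℂ :=
  of fun j l => if (l : ℕ) = 2 * (j : ℕ) then 1 else 0

/-- The signature matrix of the bipartition into even and odd nodes: multiplication by it maps a
left eigenvector of a bipartite adjacency matrix to one for the opposite eigenvalue. -/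
def paritySign (N : ℕ) : Matrix (Fin N) (Fin N) ℂ :=
  diagonal fun n => (-1) ^ (n : ℕ)

theorem paritySign_mul_finCirculant {N : ℕ} {v : ZMod N → ℂ} (hv : ∀ x, Even x → v x = 0) :
    paritySign N * finCirculant v = -(finCirculant v * paritySign N) := by
  ext i j
  rw [neg_apply, paritySign, diagonal_mul, mul_diagonal, finCirculant_apply]
  rcases Int.even_or_odd ((i : ℕ) - (j : ℕ) : ℤ) with heven | hodd
  · have hx := heven.map (Int.castRingHom (ZMod N))
    simp [hv _ (by simpa using hx)]
  · have hsign : (-1 : ℂ) ^ (i : ℕ) = -(-1) ^ (j : ℕ) := by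
      rcases Nat.even_or_odd (j : ℕ) with hj | hj
      · rw [hj.neg_one_pow, Odd.neg_one_pow (by grind)]
      · rw [hj.neg_one_pow, Even.neg_one_pow (by grind), neg_neg]
    rw [hsign]
    ring

theorem dftRows_half_apply {N : ℕ} (hN : Even N) {ι : Type*} (l : ι → ℕ) (i : ι)
    (j : Fin (N / 2)) : dftRows (N / 2) l i j = dftRows N l i ⟨2 * j, by omega⟩ := by
  have hN' : ((N / 2 : ℕ) : ℂ) = N / 2 := Nat.cast_div hN.two_dvd two_ne_zero
  simp only [dftRows, of_apply, hN', Nat.cast_mul, Nat.cast_two]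
  congr 1
  field_simp

theorem dftRows_half_mul_evenSampling {N : ℕ} (hN : Even N) {ι : Type*} (l : ι → ℕ) :
    dftRows (N / 2) l * evenSampling N = (1 / 2 : ℂ) • (dftRows N l * (1 + paritySign N)) := by
  ext i n
  rw [Matrix.smul_apply, Matrix.mul_add, Matrix.mul_one, Matrix.add_apply, paritySign,
    mul_diagonal, smul_eq_mul, mul_apply]
  simp only [evenSampling, of_apply, dftRows_half_apply hN]
  rcases Nat.even_or_odd' (n : ℕ) with ⟨q, hq | hq⟩
  · have hindex (j : Fin (N / 2)) : (n : ℕ) = 2 * j ↔ (⟨q, by grind⟩ : Fin (N / 2)) = j := by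
      grind
    simp only [hindex, mul_ite, mul_one, mul_zero, Finset.sum_ite_eq, Finset.mem_univ, if_true,
      ← hq, (hq ▸ even_two_mul q : Even (n : ℕ)).neg_one_pow]
    ring
  · rw [(hq ▸ odd_two_mul_add_one q : Odd (n : ℕ)).neg_one_pow, Finset.sum_eq_zero]
    · ring
    · intro j _
      rw [if_neg (by omega), mul_zero]

end Sampling

section Graph

/-- The weights of a circulant graph as a complex function on residues; when `N ∤ 2 * s` for
`s ∈ S`, so that `s` and `-s` do not add up, it is the first column of `circAdj N S w`. -/
noncomputable def circWeight (N : ℕ) (S : Finset ℕ) (w : ℕ → ℝ) : ZMod N → ℂ :=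
  ∑ s ∈ S, (Pi.single (s : ZMod N) (w s : ℂ) + Pi.single (-s : ZMod N) (w s : ℂ))

theorem map_circAdj {N : ℕ} {S : Finset ℕ} (w : ℕ → ℝ) (hS : ∀ s ∈ S, ¬N ∣ 2 * s) :
    (circAdj N S w).map Complex.ofReal = finCirculant (circWeight N S w) := by
  ext i j
  simp only [map_apply, circAdj, finCirculant_apply, circWeight, Complex.ofReal_sum,
    Finset.sum_apply, Pi.add_apply, Pi.single_apply, ← intCast_eq_intCast_iff']
  refine Finset.sum_congr rfl fun s hs => ?_
  have hne : (s : ZMod N) ≠ -s := by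
    intro h
    refine hS s hs ((natCast_eq_zero_iff _ _).1 ?_)
    rw [Nat.cast_mul, Nat.cast_two, two_mul]
    exact eq_neg_iff_add_eq_zero.1 h
  push_cast
  split_ifs <;> simp_all

theorem even_of_even_natCast_zmod {N : ℕ} (hN : Even N) {n : ℕ} (h : Even (n : ZMod N)) :
    Even n := by
  obtain ⟨r, hr⟩ := h.map (castHom hN.two_dvd (ZMod 2))
  rw [map_natCast, CharTwo.add_self_eq_zero] at hr
  exact natCast_eq_zero_iff_even.1 hr

theorem circWeight_eq_zero_of_even {N : ℕ} (hN : Even N) {S : Finset ℕ} (w : ℕ → ℝ)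
    (hodd : ∀ s ∈ S, Odd s) {x : ZMod N} (hx : Even x) : circWeight N S w x = 0 := by
  rw [circWeight, Finset.sum_apply]
  refine Finset.sum_eq_zero fun s hs => ?_
  have hparity : ¬Even (s : ZMod N) := fun h =>
    Nat.not_even_iff_odd.2 (hodd s hs) (even_of_even_natCast_zmod hN h)
  have hpos : x ≠ s := fun h => hparity (h ▸ hx)
  have hneg : x ≠ -s := fun h => hparity (even_neg.1 (h ▸ hx))
  rw [Pi.add_apply, Pi.single_eq_of_ne hpos, Pi.single_eq_of_ne hneg, add_zero]

theorem dft_single {N : ℕ} [NeZero N] (x : ZMod N) (a : ℂ) (k : ZMod N) :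
    𝓕 (Pi.single x a) k = stdAddChar (-(x * k)) * a := by
  simp [dft_apply, Pi.single_apply]

theorem stdAddChar_add_stdAddChar_neg {N : ℕ} [NeZero N] (x : ℤ) :
    stdAddChar (x : ZMod N) + stdAddChar (-x : ZMod N) =
      2 * ((Real.cos (2 * Real.pi * x / N) : ℝ) : ℂ) := by
  rw [← Int.cast_neg, stdAddChar_coe, stdAddChar_coe]
  push_cast
  rw [Complex.two_cos]
  ring_nf

theorem dft_circWeight {N : ℕ} [NeZero N] (S : Finset ℕ) (w : ℕ → ℝ) (l : ℕ) :
    𝓕 (circWeight N S w) l =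
      ((∑ s ∈ S, 2 * w s * Real.cos (2 * Real.pi * l * s / N) : ℝ) : ℂ) := by
  simp only [circWeight, map_sum, map_add, Finset.sum_apply, Pi.add_apply, dft_single,
    Complex.ofReal_sum]
  refine Finset.sum_congr rfl fun s _ => ?_
  have hcos := stdAddChar_add_stdAddChar_neg (N := N) (l * s)
  push_cast at hcos ⊢
  rw [neg_mul, neg_neg, ← add_mul, mul_comm (s : ZMod N), add_comm, hcos]
  ring_nf

end Graph

section Espline

/-- The polynomial `∏ₙ ((βₙ + X) / 2) ^ k` whose value at `A / d` is the HGESWT low-pass filter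
with parameters `β₀, …, β_{M-1}`. -/
noncomputable def lowPass (β : ℕ → ℂ) (M k : ℕ) : ℂ[X] :=
  ∏ n ∈ Finset.range M, C (1 / 2 ^ k) * (C (β n) + X) ^ k

theorem aeval_lowPass {B : Type*} [Ring B] [Algebra ℂ B] (b : B) (β : ℕ → ℂ) (M k : ℕ) :
    aeval b (lowPass β M k) =
      ((List.range M).map fun n => (1 / 2 ^ k : ℂ) • (β n • 1 + b) ^ k).prod := by
  induction M with
  | zero => simp [lowPass]
  | succ M ih =>
    rw [lowPass, Finset.prod_range_succ, map_mul, ← lowPass, ih, List.range_succ, List.map_append,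
      List.prod_append]
    simp [Algebra.smul_def]

theorem eval_lowPass (x : ℂ) (β : ℕ → ℂ) (M k : ℕ) :
    (lowPass β M k).eval x = ∏ n ∈ Finset.range M, ((β n + x) / 2) ^ k := by
  simp only [lowPass, eval_prod, eval_mul, eval_pow, eval_add, eval_C, eval_X, div_pow,
    one_div_mul_eq_div]

theorem eval_lowPass_neg_parameter {β : ℕ → ℂ} {M k m : ℕ} (hk : k ≠ 0) (hm : m < M) :
    (lowPass β M k).eval (-β m) = 0 := by
  rw [eval_lowPass]
  refine Finset.prod_eq_zero (Finset.mem_range.2 hm) ?_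
  rw [add_neg_cancel, zero_div, zero_pow hk]

end Espline

theorem gft_espline_decomposition_general {N : ℕ} [NeZero N] (hN : Even N) {ι : Type*} [Fintype ι]
    [DecidableEq ι] (l : ι → ℕ) {v : ZMod N → ℂ} (hv : ∀ x, Even x → v x = 0) {p : ℂ[X]}
    (hzero : ∀ i, p.eval (-𝓕 v (l i)) = 0) (hne : ∀ i, p.eval (𝓕 v (l i)) ≠ 0) :
    dftRows N l = diagonal (fun i => 2 / p.eval (𝓕 v (l i))) * dftRows (N / 2) l *
      evenSampling N * aeval (finCirculant v) p := by
  have hfilter := mul_one_add_mul_aeval_of_anticommute (dftRows_mul_finCirculant l v)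
    (paritySign_mul_finCirculant hv) hzero
  rw [Matrix.mul_assoc (diagonal _), dftRows_half_mul_evenSampling hN, Matrix.mul_assoc,
    Matrix.smul_mul, hfilter, Matrix.mul_smul, ← Matrix.mul_assoc, diagonal_mul_diagonal]
  ext i j
  rw [Matrix.smul_apply, diagonal_mul, div_mul_cancel₀ _ (hne i), smul_eq_mul, ← mul_assoc]
  norm_num

/-- decomposition of the reduced GFT (DFT) basis of a bipartite circulant
graph as `U_M^H = Ĉ · Ũ_M^H · Ψ · E`, where `E` is a HGESWT low-pass (e-spline) filter,
`Ψ` samples the even-numbered nodes, `Ũ_M^H` is the reduced DFT of dimension `N/2`, and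
`Ĉ` is an invertible diagonal matrix with entries `2/c_m`. -/
theorem gft_espline_decomposition
    (N : ℕ) (hNe : Even N) (hNpos : 0 < N) (S : Finset ℕ) (w : ℕ → ℝ)
    (hS : ∀ s ∈ S, 1 ≤ s ∧ 2 * s ≤ N - 1)
    (hw : ∀ s ∈ S, 0 < w s) (hSne : S.Nonempty)
    (hodd : ∀ s ∈ S, Odd s)
    (A : Matrix (Fin N) (Fin N) ℝ) (hA : A = circAdj N S w)
    (γ : ℕ → ℝ)
    (hγ : ∀ l : ℕ, γ l =
      (∑ s ∈ S, 2 * w s * Real.cos (2 * Real.pi * l * s / N)) / (∑ s ∈ S, 2 * w s))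
    (M k : ℕ) (hk : 1 ≤ k) (hM : M ≤ N / 2)
    (E : Matrix (Fin N) (Fin N) ℂ)
    (hE : E = ((List.finRange M).map (fun n =>
      (1 / 2 ^ k : ℂ) • (((γ (n : ℕ) : ℝ) : ℂ) • (1 : Matrix (Fin N) (Fin N) ℂ)
        + (((∑ s ∈ S, 2 * w s : ℝ) : ℂ))⁻¹ • A.map Complex.ofReal) ^ k)).prod)
    (c : ℕ → ℂ)
    (hc : ∀ m : ℕ, c m = ∏ n ∈ Finset.range M, ((((γ n : ℝ) : ℂ) + ((γ m : ℝ) : ℂ)) / 2) ^ k)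
    (hcne : ∀ m : ℕ, m < M → c m ≠ 0)
    (Chat : Matrix (Fin M) (Fin M) ℂ)
    (hChat : Chat = Matrix.diagonal (fun m : Fin M => 2 / c (m : ℕ)))
    (UMH : Matrix (Fin M) (Fin N) ℂ)
    (hUMH : ∀ (m : Fin M) (n : Fin N), UMH m n =
      Complex.exp (-2 * (Real.pi : ℂ) * Complex.I * ((m : ℕ) : ℂ) * ((n : ℕ) : ℂ) / (N : ℂ)))
    (UtMH : Matrix (Fin M) (Fin (N / 2)) ℂ)
    (hUtMH : ∀ (m : Fin M) (j : Fin (N / 2)), UtMH m j =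
      Complex.exp (-2 * (Real.pi : ℂ) * Complex.I * ((m : ℕ) : ℂ) * ((j : ℕ) : ℂ) /
        ((N / 2 : ℕ) : ℂ)))
    (Psi : Matrix (Fin (N / 2)) (Fin N) ℂ)
    (hPsi : ∀ (j : Fin (N / 2)) (l : Fin N), Psi j l = if (l : ℕ) = 2 * (j : ℕ) then 1 else 0) :
    UMH = Chat * UtMH * Psi * E := by
  have : NeZero N := ⟨hNpos.ne'⟩
  set d : ℝ := ∑ s ∈ S, 2 * w s
  set v : ZMod N → ℂ := (d : ℂ)⁻¹ • circWeight N S w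
  have hv (x : ZMod N) (hx : Even x) : v x = 0 := by
    simp [v, circWeight_eq_zero_of_even hNe w hodd hx]
  have hdft (l : ℕ) : 𝓕 v l = γ l := by
    rw [_root_.map_smul, Pi.smul_apply, dft_circWeight, hγ, Complex.ofReal_div, smul_eq_mul,
      div_eq_inv_mul]
  have hcirc : finCirculant v = (d : ℂ)⁻¹ • A.map Complex.ofReal := by
    rw [hA, map_circAdj w fun s hs => Nat.not_dvd_of_pos_of_lt (by grind) (by grind),
      finCirculant_smul]
  have hfilter : E = aeval (finCirculant v) (lowPass (fun n => γ n) M k) := by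
    rw [hE, aeval_lowPass, hcirc]
    -- the factors in `hE` are indexed by `List.finRange M`, coerced to a `List ℕ` monadically
    simp [← List.map_coe_finRange_eq_range, List.map_eq_flatMap]
  have heval (m : ℕ) : (lowPass (fun n => γ n) M k).eval (𝓕 v m) = c m := by
    rw [hdft, eval_lowPass, hc]
  rw [show UMH = dftRows N Fin.val from Matrix.ext hUMH,
    show UtMH = dftRows (N / 2) Fin.val from Matrix.ext hUtMH,
    show Psi = evenSampling N from Matrix.ext hPsi, hChat, hfilter]
  simp only [← heval]
  exact gft_espline_decomposition_general hNe _ hv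
    (fun m => hdft m ▸ eval_lowPass_neg_parameter (β := fun n => γ n) (by omega) m.2)
    fun m => heval m ▸ hcne m m.2
end
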